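/- For each unordered pair {α,β} in {{132,231}, {132,312}, {213,231}, {213,312}} of patterns of length three, and for every n ≥ 4, the number of permutations of {1,…,n} that contain α exactly once and contain β exactly once is s_n(∅;{α,β}) = 2^{n−3}. -/

import Mathlib

/-- Number of occurrences of the pattern `α ∈ S_k` in the permutation `π ∈ S_n`:
the number of strictly increasing choices of `k` indices such that the corresponding
subword of `π` is order-isomorphic to `α`. -/
noncomputable def occCount {k n : ℕ} (α : Equiv.Perm (Fin k)) (π : Equiv.Perm (Fin n)) : ℕ :=
  Nat.card {f : Fin k → Fin n // StrictMono f ∧ ∀ a b : Fin k, α a < α b ↔ π (f a) < π (f b)}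

/-- `π` avoids the pattern `α`. -/
def avoids {k n : ℕ} (α : Equiv.Perm (Fin k)) (π : Equiv.Perm (Fin n)) : Prop :=
  occCount α π = 0

/-- `π` contains the pattern `α` exactly once. -/
def containsOnce {k n : ℕ} (α : Equiv.Perm (Fin k)) (π : Equiv.Perm (Fin n)) : Prop :=
  occCount α π = 1

/-- The pattern `123` (as a permutation of `Fin 3`, 0-indexed). -/
def p123 : Equiv.Perm (Fin 3) := ⟨![0,1,2], ![0,1,2], by decide, by decide⟩
/-- The pattern `132`. -/
def p132 : Equiv.Perm (Fin 3) := ⟨![0,2,1], ![0,2,1], by decide, by decide⟩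
/-- The pattern `213`. -/
def p213 : Equiv.Perm (Fin 3) := ⟨![1,0,2], ![1,0,2], by decide, by decide⟩
/-- The pattern `231`. -/
def p231 : Equiv.Perm (Fin 3) := ⟨![1,2,0], ![2,0,1], by decide, by decide⟩
/-- The pattern `312`. -/
def p312 : Equiv.Perm (Fin 3) := ⟨![2,0,1], ![1,2,0], by decide, by decide⟩
/-- The pattern `321`. -/
def p321 : Equiv.Perm (Fin 3) := ⟨![2,1,0], ![2,1,0], by decide, by decide⟩

/-- `s_n(α;β)`: the number of permutations of `{1,…,n}` that avoid `α` and contain `β`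
exactly once. -/
noncomputable def sAvoidContain (α β : Equiv.Perm (Fin 3)) (n : ℕ) : ℕ :=
  Nat.card {π : Equiv.Perm (Fin n) // avoids α π ∧ containsOnce β π}

/-- `s_n(∅;{α,β})`: the number of permutations of `{1,…,n}` that contain each of `α` and `β`
exactly once. -/
noncomputable def sContainBoth (α β : Equiv.Perm (Fin 3)) (n : ℕ) : ℕ :=
  Nat.card {π : Equiv.Perm (Fin n) // containsOnce α π ∧ containsOnce β π}

/-!
The four pairs are images of `{132, 231}` under inversion and complementation, so it suffices to
count for that pair. If the maximum of a permutation has `a` entries to its left and `b` to its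
right, then each of the `a * b` triples formed by the maximum, an entry to its left and an entry to
its right is an occurrence of `132` or of `231`. Hence `a * b ≤ 2` when both patterns occur exactly
once. For length at least five this puts the maximum at one of the two ends, where it takes part in
no occurrence of either pattern, so the count doubles with each increase of the length. In length
four the maximum lies in the interior in both admissible permutations (`2413` and `3142`), so the
induction starts there, from a direct enumeration.
-/

section Occurrences

variable {k n : ℕ} {α : Equiv.Perm (Fin k)} {π : Equiv.Perm (Fin n)} {f : Fin k → Fin n}

/-- `f` lists the positions of an occurrence of the pattern `α` in `π`. -/
def IsOccurrence (α : Equiv.Perm (Fin k)) (π : Equiv.Perm (Fin n)) (f : Fin k → Fin n) : Prop :=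
  StrictMono f ∧ ∀ a b : Fin k, α a < α b ↔ π (f a) < π (f b)

theorem occCount_eq_ncard (α : Equiv.Perm (Fin k)) (π : Equiv.Perm (Fin n)) :
    occCount α π = {f | IsOccurrence α π f}.ncard :=
  rfl

/-- The values of an occurrence, read in increasing order, are `π ∘ f ∘ α⁻¹`; inverting `π`
exchanges this increasing list with the list `f` of positions. -/
theorem isOccurrence_iff_strictMono :
    IsOccurrence α π f ↔ StrictMono f ∧ StrictMono (π ∘ f ∘ ⇑α⁻¹) := by
  refine and_congr_right fun _ => ⟨fun h i j hij => ?_, fun h a b => ?_⟩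
  · exact (h _ _).1 (by simpa using hij)
  · simpa using (h.lt_iff_lt (a := α a) (b := α b)).symm

theorem IsOccurrence.inv (hf : IsOccurrence α π f) : IsOccurrence α⁻¹ π⁻¹ (π ∘ f ∘ ⇑α⁻¹) := by
  rw [isOccurrence_iff_strictMono] at hf ⊢
  refine ⟨hf.2, ?_⟩
  convert hf.1
  ext i
  simp

theorem occCount_le_occCount_inv (α : Equiv.Perm (Fin k)) (π : Equiv.Perm (Fin n)) :
    occCount α π ≤ occCount α⁻¹ π⁻¹ :=
  Set.ncard_le_ncard_of_injOn (fun f => π ∘ f ∘ ⇑α⁻¹) (fun _ => IsOccurrence.inv) <|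
    (π.injective.comp_left.comp α⁻¹.surjective.injective_comp_right).injOn

theorem occCount_inv (α : Equiv.Perm (Fin k)) (π : Equiv.Perm (Fin n)) :
    occCount α⁻¹ π⁻¹ = occCount α π :=
  (occCount_le_occCount_inv α⁻¹ π⁻¹).antisymm (occCount_le_occCount_inv α π)

theorem isOccurrence_complement :
    IsOccurrence (Fin.revPerm * α) (Fin.revPerm * π) f ↔ IsOccurrence α π f := by
  simp only [IsOccurrence, Equiv.Perm.mul_apply, Fin.revPerm_apply, Fin.rev_lt_rev]
  exact and_congr_right fun _ => forall_comm

theorem occCount_complement (α : Equiv.Perm (Fin k)) (π : Equiv.Perm (Fin n)) :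
    occCount (Fin.revPerm * α) (Fin.revPerm * π) = occCount α π := by
  simp only [occCount_eq_ncard, isOccurrence_complement]

instance : Decidable (IsOccurrence α π f) := by
  unfold IsOccurrence StrictMono
  infer_instance

instance : Decidable (containsOnce α π) :=
  decidable_of_iff (Fintype.card {f // IsOccurrence α π f} = 1) <| by
    rw [← Nat.card_eq_fintype_card]
    rfl

end Occurrences

section InsertMax

variable {k n : ℕ}

/-- The permutation of `{0, …, n}` whose word is that of `σ` with the new maximum `n` inserted at
position `p`. -/
def insertMax (p : Fin (n + 1)) (σ : Equiv.Perm (Fin n)) : Equiv.Perm (Fin (n + 1)) :=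
  (finSuccEquiv' p).trans (σ.optionCongr.trans (finSuccEquiv' (Fin.last n)).symm)

@[simp]
theorem insertMax_apply_self (p : Fin (n + 1)) (σ : Equiv.Perm (Fin n)) :
    insertMax p σ p = Fin.last n := by
  simp [insertMax]

@[simp]
theorem insertMax_apply_succAbove (p : Fin (n + 1)) (σ : Equiv.Perm (Fin n)) (i : Fin n) :
    insertMax p σ (p.succAbove i) = (σ i).castSucc := by
  simp [insertMax]

theorem insertMax_injective (p : Fin (n + 1)) : Function.Injective (insertMax (n := n) p) :=
  fun σ τ h => Equiv.ext fun i => Fin.castSucc_injective n <| by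
    simpa using DFunLike.congr_fun h (p.succAbove i)

theorem range_insertMax (p : Fin (n + 1)) :
    Set.range (insertMax p) = {π : Equiv.Perm (Fin (n + 1)) | π p = Fin.last n} := by
  ext π
  constructor
  · rintro ⟨σ, rfl⟩
    exact insertMax_apply_self p σ
  intro (h : π p = Fin.last n)
  set e : Option (Fin n) ≃ Option (Fin n) :=
    (finSuccEquiv' p).symm.trans (π.trans (finSuccEquiv' (Fin.last n))) with he
  have e_none : e none = none := by simp [he, h]
  have e_eq : e.removeNone.optionCongr = e := by
    ext1 (_ | i)
    · exact e_none.symm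
    · refine e.removeNone_some (Option.ne_none_iff_exists'.1 fun hi => ?_)
      exact Option.some_ne_none i (e.injective (hi.trans e_none.symm))
  refine ⟨e.removeNone, ?_⟩
  rw [insertMax, e_eq, he]
  ext i
  simp

variable {p : Fin (n + 1)} {σ : Equiv.Perm (Fin n)}

theorem isOccurrence_insertMax_succAbove {α : Equiv.Perm (Fin k)} {f : Fin k → Fin n} :
    IsOccurrence α (insertMax p σ) (p.succAbove ∘ f) ↔ IsOccurrence α σ f := by
  simp only [IsOccurrence, Function.comp_apply, insertMax_apply_succAbove,
    Fin.castSucc_lt_castSucc_iff]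
  simp only [StrictMono, Function.comp_apply, (Fin.strictMono_succAbove p).lt_iff_lt]

theorem occCount_insertMax_of_forall_ne {α : Equiv.Perm (Fin k)}
    (h : ∀ f, IsOccurrence α (insertMax p σ) f → ∀ i, f i ≠ p) :
    occCount α (insertMax p σ) = occCount α σ := by
  have h_range : {f | IsOccurrence α (insertMax p σ) f} ⊆ Set.range (p.succAbove ∘ ·) := by
    intro f hf
    choose g hg using fun i => Fin.exists_succAbove_eq (h f hf i)
    exact ⟨g, funext hg⟩
  rw [occCount_eq_ncard, occCount_eq_ncard, ← Set.ncard_preimage_of_injective_subset_range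
    Fin.succAbove_right_injective.comp_left h_range]
  simp only [Set.preimage_ofPred_eq, isOccurrence_insertMax_succAbove]

variable {α : Equiv.Perm (Fin (k + 1))}

theorem IsOccurrence.apply_eq_last {π : Equiv.Perm (Fin (n + 1))} {f : Fin (k + 1) → Fin (n + 1)}
    (hf : IsOccurrence α π f) {i : Fin (k + 1)} (hi : π (f i) = Fin.last n) :
    α i = Fin.last k := by
  by_contra hα
  have h_lt : α i < α (α⁻¹ (Fin.last k)) := by
    simpa using Fin.lt_last_iff_ne_last.2 hα
  exact ((hf.2 _ _).1 h_lt).not_ge (hi ▸ Fin.le_last _)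

theorem occCount_insertMax_zero (hα : α 0 ≠ Fin.last k) (σ : Equiv.Perm (Fin n)) :
    occCount α (insertMax 0 σ) = occCount α σ := by
  refine occCount_insertMax_of_forall_ne fun f hf i hi => ?_
  obtain rfl : i = 0 := by
    by_contra h
    exact Fin.not_lt_zero _ (hi ▸ hf.1 (Fin.pos_of_ne_zero h))
  exact hα (hf.apply_eq_last (by rw [hi, insertMax_apply_self]))

theorem occCount_insertMax_last (hα : α (Fin.last k) ≠ Fin.last k) (σ : Equiv.Perm (Fin n)) :
    occCount α (insertMax (Fin.last n) σ) = occCount α σ := by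
  refine occCount_insertMax_of_forall_ne fun f hf i hi => ?_
  obtain rfl : i = Fin.last k := by
    by_contra h
    exact (hi ▸ hf.1 (Fin.lt_last_iff_ne_last.2 h)).not_ge (Fin.le_last _)
  exact hα (hf.apply_eq_last (by rw [hi, insertMax_apply_self]))

end InsertMax

section MaximumPosition

variable {n : ℕ}

theorem isOccurrence_p132 {π : Equiv.Perm (Fin n)} {a b c : Fin n} (hab : a < b) (hbc : b < c)
    (hac : π a < π c) (hcb : π c < π b) : IsOccurrence p132 π ![a, b, c] := by
  rw [isOccurrence_iff_strictMono, Fin.strictMono_iff_lt_succ, Fin.strictMono_iff_lt_succ]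
  simp only [Fin.forall_fin_two]
  exact ⟨⟨hab, hbc⟩, hac, hcb⟩

theorem isOccurrence_p231 {π : Equiv.Perm (Fin n)} {a b c : Fin n} (hab : a < b) (hbc : b < c)
    (hca : π c < π a) (hab' : π a < π b) : IsOccurrence p231 π ![a, b, c] := by
  rw [isOccurrence_iff_strictMono, Fin.strictMono_iff_lt_succ, Fin.strictMono_iff_lt_succ]
  simp only [Fin.forall_fin_two]
  exact ⟨⟨hab, hbc⟩, hca, hab'⟩

/-- Together with the maximum, one entry to its left and one entry to its right always form an
occurrence of `132` or of `231`. -/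
theorem mul_le_occCount_p132_add_occCount_p231 {π : Equiv.Perm (Fin (n + 1))} {p : Fin (n + 1)}
    (hp : π p = Fin.last n) : p * (n - p) ≤ occCount p132 π + occCount p231 π := by
  have apply_lt : ∀ {x}, x ≠ p → π x < π p := fun hx =>
    hp ▸ Fin.lt_last_iff_ne_last.2 fun h => hx (π.injective (h.trans hp.symm))
  have h_maps : ∀ x ∈ Set.Iio p ×ˢ Set.Ioi p,
      ![x.1, p, x.2] ∈ {f | IsOccurrence p132 π f} ∪ {f | IsOccurrence p231 π f} := by
    rintro ⟨a, b⟩ ⟨ha : a < p, hb : p < b⟩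
    rcases lt_or_gt_of_ne (π.injective.ne (ha.trans hb).ne) with h | h
    · exact .inl (isOccurrence_p132 ha hb h (apply_lt hb.ne'))
    · exact .inr (isOccurrence_p231 ha hb h (apply_lt ha.ne))
  have h_inj : Function.Injective fun x : Fin (n + 1) × Fin (n + 1) => ![x.1, p, x.2] :=
    fun x y h => Prod.ext (congrFun h 0) (congrFun h 2)
  calc (p * (n - p) : ℕ) = (Set.Iio p ×ˢ Set.Ioi p).ncard := by
        simp [Set.ncard_eq_toFinset_card']
    _ ≤ ({f | IsOccurrence p132 π f} ∪ {f | IsOccurrence p231 π f}).ncard :=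
        Set.ncard_le_ncard_of_injOn _ h_maps h_inj.injOn
    _ ≤ occCount p132 π + occCount p231 π := Set.ncard_union_le _ _

theorem apply_zero_or_apply_last_eq_last (hn : 4 ≤ n) {π : Equiv.Perm (Fin (n + 1))}
    (h132 : containsOnce p132 π) (h231 : containsOnce p231 π) :
    π 0 = Fin.last n ∨ π (Fin.last n) = Fin.last n := by
  obtain ⟨p, hp⟩ := π.surjective (Fin.last n)
  have h_le := mul_le_occCount_p132_add_occCount_p231 hp
  rw [h132, h231] at h_le
  have p_eq : p = 0 ∨ p = Fin.last n := by
    by_contra! h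
    have h_left : 0 < (p : ℕ) := Fin.pos_of_ne_zero h.1
    have h_right : (p : ℕ) < n := Fin.lt_last_iff_ne_last.2 h.2
    obtain ⟨m, hm⟩ := Nat.exists_eq_add_of_lt h_right
    rw [show n - p = m + 1 by omega] at h_le
    nlinarith
  rcases p_eq with rfl | rfl
  exacts [.inl hp, .inr hp]

end MaximumPosition

section ContainBoth

variable {n : ℕ}

/-- The set `S_n(∅;{α,β})` of permutations containing each of `α` and `β` exactly once. -/
def containBothSet (α β : Equiv.Perm (Fin 3)) (n : ℕ) : Set (Equiv.Perm (Fin n)) :=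
  {π | containsOnce α π ∧ containsOnce β π}

theorem sContainBoth_eq_ncard (α β : Equiv.Perm (Fin 3)) (n : ℕ) :
    sContainBoth α β n = (containBothSet α β n).ncard :=
  rfl

theorem sContainBoth_comm (α β : Equiv.Perm (Fin 3)) (n : ℕ) :
    sContainBoth α β n = sContainBoth β α n := by
  simp only [sContainBoth, and_comm]

theorem sContainBoth_inv (α β : Equiv.Perm (Fin 3)) (n : ℕ) :
    sContainBoth α⁻¹ β⁻¹ n = sContainBoth α β n :=
  (Nat.card_congr ((Equiv.inv (Equiv.Perm (Fin n))).subtypeEquiv fun π => by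
    simp only [Equiv.inv_apply, containsOnce, occCount_inv])).symm

theorem sContainBoth_complement (α β : Equiv.Perm (Fin 3)) (n : ℕ) :
    sContainBoth (Fin.revPerm * α) (Fin.revPerm * β) n = sContainBoth α β n :=
  (Nat.card_congr ((Equiv.mulLeft Fin.revPerm).subtypeEquiv fun π => by
    simp only [Equiv.coe_mulLeft, containsOnce, occCount_complement])).symm

theorem image_insertMax_zero_containBothSet {α β : Equiv.Perm (Fin 3)} (hα : α 0 ≠ Fin.last 2)
    (hβ : β 0 ≠ Fin.last 2) :
    insertMax 0 '' containBothSet α β n =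
      containBothSet α β (n + 1) ∩ {π | π 0 = Fin.last n} := by
  rw [← range_insertMax, ← Set.image_preimage_eq_inter_range]
  simp only [containBothSet, containsOnce, Set.preimage_ofPred_eq, occCount_insertMax_zero hα,
    occCount_insertMax_zero hβ]

theorem image_insertMax_last_containBothSet {α β : Equiv.Perm (Fin 3)}
    (hα : α (Fin.last 2) ≠ Fin.last 2) (hβ : β (Fin.last 2) ≠ Fin.last 2) :
    insertMax (Fin.last n) '' containBothSet α β n =
      containBothSet α β (n + 1) ∩ {π | π (Fin.last n) = Fin.last n} := by
  rw [← range_insertMax, ← Set.image_preimage_eq_inter_range]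
  simp only [containBothSet, containsOnce, Set.preimage_ofPred_eq, occCount_insertMax_last hα,
    occCount_insertMax_last hβ]

theorem sContainBoth_p132_p231_succ (hn : 4 ≤ n) :
    sContainBoth p132 p231 (n + 1) = 2 * sContainBoth p132 p231 n := by
  have h_union : containBothSet p132 p231 (n + 1) =
      insertMax 0 '' containBothSet p132 p231 n ∪
        insertMax (Fin.last n) '' containBothSet p132 p231 n := by
    rw [image_insertMax_zero_containBothSet (by decide) (by decide),
      image_insertMax_last_containBothSet (by decide) (by decide), ← Set.inter_union_distrib_left]
    exact (Set.inter_eq_left.2 fun π hπ => apply_zero_or_apply_last_eq_last hn hπ.1 hπ.2).symm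
  have h_disjoint : Disjoint (insertMax 0 '' containBothSet p132 p231 n)
      (insertMax (Fin.last n) '' containBothSet p132 p231 n) := by
    rw [Set.disjoint_left]
    rintro _ ⟨σ, -, rfl⟩ ⟨τ, -, h⟩
    have h_zero_eq : (0 : Fin (n + 1)) = Fin.last n := (insertMax 0 σ).injective <| by
      rw [insertMax_apply_self, ← h, insertMax_apply_self]
    have : (0 : ℕ) = n := congrArg Fin.val h_zero_eq
    omega
  rw [sContainBoth_eq_ncard, h_union, Set.ncard_union_eq h_disjoint,
    Set.ncard_image_of_injective _ (insertMax_injective _),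
    Set.ncard_image_of_injective _ (insertMax_injective _), ← two_mul, ← sContainBoth_eq_ncard]

theorem sContainBoth_p132_p231_four : sContainBoth p132 p231 4 = 2 := by
  rw [sContainBoth, Nat.card_eq_fintype_card]
  decide +kernel

theorem sContainBoth_p132_p231 (hn : 4 ≤ n) : sContainBoth p132 p231 n = 2 ^ (n - 3) := by
  induction n, hn using Nat.le_induction with
  | base => exact sContainBoth_p132_p231_four
  | succ n hn ih =>
    rw [sContainBoth_p132_p231_succ hn, ih, ← pow_succ', Nat.sub_add_comm (by omega)]

end ContainBoth

/-- Theorem 5.4: for each listed pair `{α,β}`, `s_n(∅;{α,β}) = 2^{n−3}` for `n ≥ 4`. -/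
theorem sContainBoth_eq_of_mem_classJ :
    ∀ p ∈ [(p132, p231), (p132, p312), (p213, p231), (p213, p312)],
      ∀ n : ℕ, 4 ≤ n → sContainBoth p.1 p.2 n = 2 ^ (n - 3) := by
  have p132_inv : p132⁻¹ = p132 := by decide
  have p213_inv : p213⁻¹ = p213 := by decide
  have p231_inv : p231⁻¹ = p312 := by decide
  have p312_inv : p312⁻¹ = p231 := by decide
  have compl_p132 : Fin.revPerm * p132 = p312 := by decide
  have compl_p231 : Fin.revPerm * p231 = p213 := by decide
  intro p hp n hn
  have h_132_231 : sContainBoth p132 p231 n = 2 ^ (n - 3) := sContainBoth_p132_p231 hn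
  have h_132_312 : sContainBoth p132 p312 n = 2 ^ (n - 3) := by
    rw [← h_132_231, ← sContainBoth_inv p132 p231, p132_inv, p231_inv]
  have h_213_312 : sContainBoth p213 p312 n = 2 ^ (n - 3) := by
    rw [sContainBoth_comm, ← h_132_231, ← sContainBoth_complement p132, compl_p132, compl_p231]
  have h_213_231 : sContainBoth p213 p231 n = 2 ^ (n - 3) := by
    rw [← h_213_312, ← sContainBoth_inv p213 p312, p213_inv, p312_inv]
  simp only [List.mem_cons, List.not_mem_nil, or_false] at hp
  rcases hp with rfl | rfl | rfl | rfl
  exacts [h_132_231, h_132_312, h_213_231, h_213_312]
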